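/- The reduction rate of any mixed transport is bounded below as follows: (x + y)/(x + y + 2·d1) ≤ (x1 + x2 + d3 + z2 + z1)/(d1 + d2 + d3). -/

import Mathlib

/-!
For `c ≥ 0`, the quotient `s / (s + c)` increases with `s`. Let `N` be the length of the mixed route
and `D` the total length of the lanes. Shortcutting the route past the points of lane 2 and the end
of lane 3 gives `x + y ≤ N`, and detouring lane 2 through lane 1 gives `D ≤ N + 2 * d1`. Hence
`(x + y) / (x + y + 2 * d1) ≤ N / (N + 2 * d1) ≤ N / D`.
-/

lemma div_add_le_div_add_of_le {α : Type*} [Field α] [LinearOrder α] [IsStrictOrderedRing α]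
    {a b c : α} (hab : a ≤ b) (hc : 0 ≤ c) (hac : 0 < a + c) : a / (a + c) ≤ b / (b + c) := by
  have hbc : 0 < b + c := by linarith
  rw [div_le_div_iff₀ hac hbc, mul_add, mul_add, mul_comm b a]
  gcongr

section MixedRoute

variable {B : Type*} [PseudoMetricSpace B] (t1s t1e t2s t2e t3s t3e : B)

/-- The length of the route of a mixed transport, the numerator of its reduction rate: the three
starting points are visited in order and the three end points in the reverse order. The arguments
list the start and the end of each lane in turn, not the points in the order of the route. -/
noncomputable def mixedRouteLength : ℝ :=
  dist t1s t2s + dist t2s t3s + dist t3s t3e + dist t3e t2e + dist t2e t1e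

lemma dist_add_dist_le_mixedRouteLength :
    dist t1s t3s + dist t3s t1e ≤ mixedRouteLength t1s t1e t2s t2e t3s t3e := by
  unfold mixedRouteLength
  linarith [dist_triangle t1s t2s t3s, dist_triangle4 t3s t3e t2e t1e]

lemma sum_dist_le_mixedRouteLength_add :
    dist t1s t1e + dist t2s t2e + dist t3s t3e ≤
      mixedRouteLength t1s t1e t2s t2e t3s t3e + 2 * dist t1s t1e := by
  have lane2_le_detour : dist t2s t2e ≤ dist t1s t2s + dist t1s t1e + dist t2e t1e := by
    simpa only [dist_comm t2s t1s, dist_comm t1e t2e] using dist_triangle4 t2s t1s t1e t2e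
  have h_starts : 0 ≤ dist t2s t3s := dist_nonneg
  have h_ends : 0 ≤ dist t3e t2e := dist_nonneg
  unfold mixedRouteLength
  linarith

theorem stmt7_general (hd1 : 0 < dist t1s t1e) :
    (dist t1s t3s + dist t3s t1e) / (dist t1s t3s + dist t3s t1e + 2 * dist t1s t1e) ≤
      mixedRouteLength t1s t1e t2s t2e t3s t3e /
        (dist t1s t1e + dist t2s t2e + dist t3s t3e) := by
  have shortcut := dist_add_dist_le_mixedRouteLength t1s t1e t2s t2e t3s t3e
  have detour := sum_dist_le_mixedRouteLength_add t1s t1e t2s t2e t3s t3e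
  have length_nonneg : 0 ≤ mixedRouteLength t1s t1e t2s t2e t3s t3e :=
    le_trans (by positivity) shortcut
  calc (dist t1s t3s + dist t3s t1e) / (dist t1s t3s + dist t3s t1e + 2 * dist t1s t1e)
      ≤ mixedRouteLength t1s t1e t2s t2e t3s t3e /
          (mixedRouteLength t1s t1e t2s t2e t3s t3e + 2 * dist t1s t1e) :=
        div_add_le_div_add_of_le shortcut (by positivity) (by positivity)
    _ ≤ mixedRouteLength t1s t1e t2s t2e t3s t3e /
          (dist t1s t1e + dist t2s t2e + dist t3s t3e) :=
        div_le_div_of_nonneg_left length_nonneg (by positivity) detour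

end MixedRoute

theorem stmt7 {B : Type*} [MetricSpace B] (t1s t1e t2s t2e t3s t3e : B)
    (hd1 : 0 < dist t1s t1e) (hd2 : 0 < dist t2s t2e) (hd3 : 0 < dist t3s t3e) :
    (dist t1s t3s + dist t3s t1e) / (dist t1s t3s + dist t3s t1e + 2 * (dist t1s t1e)) ≤ (dist t1s t2s + dist t2s t3s + dist t3s t3e + dist t3e t2e + dist t2e t1e) / (dist t1s t1e + dist t2s t2e + dist t3s t3e) :=
  stmt7_general t1s t1e t2s t2e t3s t3e hd1
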